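/- Let ι be a finite nonempty index set and for each k ∈ ι let R_k be a finite nontrivial commutative local principal ideal ring, and let R = ∏_{k ∈ ι} R_k be the product ring. Then the group of affine permutations of R contains a cross-commuting nonabelian square if and only if there exist distinct indices i ≠ j in ι such that the affine permutation group of R_i contains a noncommuting pair and the affine permutation group of R_j contains a noncommuting pair. -/

import Mathlib

/-- Two self-maps of a type commute under composition. -/
def MapsCommute {α : Type*} (f g : α → α) : Prop :=
  f ∘ g = g ∘ f

/-- `f : R → R` is an affine permutation: `x ↦ a·x + b` with `a` a unit of `R`. -/
def IsAffinePerm {R : Type*} [CommRing R] (f : R → R) : Prop :=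
  ∃ a : Rˣ, ∃ b : R, ∀ x, f x = (a : R) * x + b

/-- A cross-commuting nonabelian square exists in the affine permutation group of `R`. -/
def HasCrossCommutingNonabelianSquare (R : Type*) [CommRing R] : Prop :=
  ∃ F₀ F₁ G₀ G₁ : R → R,
    IsAffinePerm F₀ ∧ IsAffinePerm F₁ ∧ IsAffinePerm G₀ ∧ IsAffinePerm G₁ ∧
    MapsCommute F₀ G₀ ∧ MapsCommute F₀ G₁ ∧ MapsCommute F₁ G₀ ∧ MapsCommute F₁ G₁ ∧
    ¬ MapsCommute F₀ F₁ ∧ ¬ MapsCommute G₀ G₁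

/-- The affine permutation group of `S` contains a noncommuting pair. -/
def HasNoncommutingAffinePair (S : Type*) [CommRing S] : Prop :=
  ∃ f g : S → S, IsAffinePerm f ∧ IsAffinePerm g ∧ ¬ MapsCommute f g

/-!
The maps `x ↦ a * x + b` and `x ↦ c * x + d` commute exactly when the vectors `(a - 1, b)` and
`(c - 1, d)` are parallel, in the sense that their determinant vanishes. In a local principal ideal
ring divisibility is total, so the ideals generated by the coordinates of such vectors form a chain,
and two vectors parallel to a third one whose coordinate ideal contains theirs are parallel to each
other. Given two pairs of vectors, each vector of one pair parallel to each vector of the other, the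
largest of the four coordinate ideals belongs to a vector of one pair, and hence the vectors of the
other pair are parallel: a single factor carries no square. An affine permutation of a product acts
factor by factor, so a square in the product needs two nonabelian factors; two suffice because maps
acting on different factors commute.
-/

section Parallel

variable {S : Type*} [CommRing S]

/-- Two vectors of `S × S` are parallel if their determinant vanishes. Over rings with zero
divisors this relation is not transitive, even among nonzero vectors. -/
def Parallel (p q : S × S) : Prop :=
  p.1 * q.2 = q.1 * p.2

/-- The ideal generated by the two coordinates of a vector, measuring its size. -/
def coordIdeal (p : S × S) : Ideal S :=
  Ideal.span {p.1, p.2}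

theorem mapsCommute_iff_parallel {f g : S → S} {a b c d : S}
    (hf : ∀ x, f x = a * x + b) (hg : ∀ x, g x = c * x + d) :
    MapsCommute f g ↔ Parallel (a - 1, b) (c - 1, d) := by
  simp only [MapsCommute, Parallel, funext_iff, Function.comp_apply, hf, hg]
  constructor
  · intro h
    linear_combination h 0
  · intro h x
    linear_combination h

theorem Parallel.symm {p q : S × S} (h : Parallel p q) : Parallel q p :=
  Eq.symm h

theorem parallel_swap_iff {p q : S × S} : Parallel p.swap q.swap ↔ Parallel p q := by
  simp only [Parallel, Prod.fst_swap, Prod.snd_swap, mul_comm, eq_comm]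

theorem coordIdeal_swap (p : S × S) : coordIdeal p.swap = coordIdeal p :=
  congrArg Ideal.span (Set.pair_comm p.2 p.1)

theorem dvd_fst_of_coordIdeal_le {p q : S × S} (hp : p.1 ∣ p.2)
    (h : coordIdeal q ≤ coordIdeal p) : p.1 ∣ q.1 := by
  obtain ⟨x, y, hxy⟩ := Ideal.mem_span_pair.mp (h (Ideal.mem_span_pair.mpr ⟨1, 0, rfl⟩))
  have hq : p.1 ∣ x * p.1 + y * p.2 := (dvd_mul_left _ x).add (hp.mul_left y)
  simpa [hxy] using hq

theorem Parallel.of_fst_dvd {p q r : S × S} (hpq : Parallel p q) (hpr : Parallel p r)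
    (hq : p.1 ∣ q.1) (hr : p.1 ∣ r.1) : Parallel q r := by
  obtain ⟨x, hx⟩ := hq
  obtain ⟨y, hy⟩ := hr
  calc
    q.1 * r.2 = x * (p.1 * r.2) := by rw [hx]; ring
    _ = x * (p.1 * y * p.2) := by rw [hpr, hy]
    _ = y * (q.1 * p.2) := by rw [hx]; ring
    _ = r.1 * q.2 := by rw [← hpq, hy]; ring

section PreValuationRing

variable [PreValuationRing S]

theorem Parallel.of_coordIdeal_le {p q r : S × S} (hpq : Parallel p q) (hpr : Parallel p r)
    (hq : coordIdeal q ≤ coordIdeal p) (hr : coordIdeal r ≤ coordIdeal p) : Parallel q r := by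
  rcases ValuationRing.dvd_total p.1 p.2 with hp | hp
  · exact hpq.of_fst_dvd hpr (dvd_fst_of_coordIdeal_le hp hq) (dvd_fst_of_coordIdeal_le hp hr)
  · rw [← coordIdeal_swap, ← coordIdeal_swap p] at hq hr
    rw [← parallel_swap_iff] at hpq hpr ⊢
    exact hpq.of_fst_dvd hpr (dvd_fst_of_coordIdeal_le hp hq) (dvd_fst_of_coordIdeal_le hp hr)

theorem coordIdeal_le_total (p q : S × S) :
    coordIdeal p ≤ coordIdeal q ∨ coordIdeal q ≤ coordIdeal p :=
  (PreValuationRing.iff_ideal_total.mp inferInstance).total _ _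

theorem parallel_or_parallel_of_cross {p₀ p₁ q₀ q₁ : S × S}
    (h₀₀ : Parallel p₀ q₀) (h₀₁ : Parallel p₀ q₁) (h₁₀ : Parallel p₁ q₀) (h₁₁ : Parallel p₁ q₁) :
    Parallel p₀ p₁ ∨ Parallel q₀ q₁ := by
  wlog hp : coordIdeal p₀ ≤ coordIdeal p₁ generalizing p₀ p₁
  · exact (this h₁₀ h₁₁ h₀₀ h₀₁ ((coordIdeal_le_total p₀ p₁).resolve_left hp)).imp_left
      Parallel.symm
  rcases coordIdeal_le_total p₁ q₀ with hq₀ | hq₀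
  · exact .inl (h₀₀.symm.of_coordIdeal_le h₁₀.symm (hp.trans hq₀) hq₀)
  rcases coordIdeal_le_total p₁ q₁ with hq₁ | hq₁
  · exact .inl (h₀₁.symm.of_coordIdeal_le h₁₁.symm (hp.trans hq₁) hq₁)
  · exact .inr (h₁₀.of_coordIdeal_le h₁₁ hq₀ hq₁)

variable (S) in
theorem not_hasCrossCommutingNonabelianSquare_of_preValuationRing :
    ¬ HasCrossCommutingNonabelianSquare S := by
  rintro ⟨F₀, F₁, G₀, G₁, ⟨a₀, b₀, hF₀⟩, ⟨a₁, b₁, hF₁⟩, ⟨c₀, d₀, hG₀⟩, ⟨c₁, d₁, hG₁⟩,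
    h₀₀, h₀₁, h₁₀, h₁₁, hF, hG⟩
  rw [mapsCommute_iff_parallel hF₀ hG₀] at h₀₀
  rw [mapsCommute_iff_parallel hF₀ hG₁] at h₀₁
  rw [mapsCommute_iff_parallel hF₁ hG₀] at h₁₀
  rw [mapsCommute_iff_parallel hF₁ hG₁] at h₁₁
  rw [mapsCommute_iff_parallel hF₀ hF₁] at hF
  rw [mapsCommute_iff_parallel hG₀ hG₁] at hG
  exact (parallel_or_parallel_of_cross h₀₀ h₀₁ h₁₀ h₁₁).elim hF hG

end PreValuationRing

end Parallel

theorem preValuationRing_of_isLocalRing_of_isBezout (S : Type*) [CommRing S] [IsLocalRing S]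
    [IsBezout S] : PreValuationRing S := by
  refine PreValuationRing.iff_dvd_total.mpr ⟨fun a b => ?_⟩
  obtain ⟨x, y, hxy⟩ := IsBezout.gcd_eq_sum a b
  obtain ⟨a', ha⟩ := IsBezout.gcd_dvd_left a b
  obtain ⟨b', hb⟩ := IsBezout.gcd_dvd_right a b
  generalize IsBezout.gcd a b = g at hxy ha hb
  subst ha hb
  rcases IsLocalRing.isUnit_or_isUnit_one_sub_self (x * a' + y * b') with h | h
  · rcases IsLocalRing.isUnit_or_isUnit_of_isUnit_add h with h | h
    · exact .inl (mul_dvd_mul_left g (isUnit_of_mul_isUnit_right h).dvd)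
    · exact .inr (mul_dvd_mul_left g (isUnit_of_mul_isUnit_right h).dvd)
  · have hg : g * (1 - (x * a' + y * b')) = 0 := by linear_combination -hxy
    simp [h.mul_left_eq_zero.mp hg]

section Pi

variable {ι : Type*}

theorem mapsCommute_piMap_iff {α : ι → Type*} [∀ k, Nonempty (α k)] {f g : ∀ k, α k → α k} :
    MapsCommute (Pi.map f) (Pi.map g) ↔ ∀ k, MapsCommute (f k) (g k) := by
  classical
  constructor
  · intro h k
    funext y
    let x : ∀ k, α k := Function.update (fun k => Classical.arbitrary (α k)) k y
    simpa [x] using congrFun (congrFun h x) k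
  · intro h
    funext x k
    exact congrFun (h k) (x k)

section MapAt

variable {α : ι → Type*} [DecidableEq ι]

/-- The self-map of a product that applies `f` to the coordinate `i` and fixes the others. -/
def mapAt (i : ι) (f : α i → α i) : (∀ k, α k) → ∀ k, α k :=
  Pi.map (Function.update (fun _ => id) i f)

variable [∀ k, Nonempty (α k)]

theorem mapsCommute_mapAt_iff {i : ι} {f g : α i → α i} :
    MapsCommute (mapAt i f) (mapAt i g) ↔ MapsCommute f g := by
  rw [mapAt, mapAt, mapsCommute_piMap_iff]
  refine ⟨fun h => by simpa using h i, fun h k => ?_⟩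
  rcases eq_or_ne k i with rfl | hk
  · simpa using h
  · simp [hk, MapsCommute]

theorem mapsCommute_mapAt_of_ne {i j : ι} (hij : i ≠ j) (f : α i → α i) (g : α j → α j) :
    MapsCommute (mapAt i f) (mapAt j g) := by
  refine mapsCommute_piMap_iff.mpr fun k => ?_
  rcases eq_or_ne k i with rfl | hk
  · simp [hij, MapsCommute]
  · simp [hk, MapsCommute]

end MapAt

variable {R : ι → Type*} [∀ k, CommRing (R k)]

theorem isAffinePerm_id {S : Type*} [CommRing S] : IsAffinePerm (id : S → S) :=
  ⟨1, 0, fun x => by simp⟩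

theorem IsAffinePerm.piMap {f : ∀ k, R k → R k} (hf : ∀ k, IsAffinePerm (f k)) :
    IsAffinePerm (Pi.map f) := by
  choose a b h using hf
  exact ⟨MulEquiv.piUnits.symm a, b, fun x => funext fun k => h k (x k)⟩

theorem IsAffinePerm.exists_eq_piMap {F : (∀ k, R k) → ∀ k, R k} (hF : IsAffinePerm F) :
    ∃ f : ∀ k, R k → R k, (∀ k, IsAffinePerm (f k)) ∧ F = Pi.map f := by
  obtain ⟨a, b, h⟩ := hF
  exact ⟨fun k y => MulEquiv.piUnits a k * y + b k, fun k => ⟨_, _, fun _ => rfl⟩, funext h⟩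

theorem IsAffinePerm.mapAt [DecidableEq ι] {i : ι} {f : R i → R i} (hf : IsAffinePerm f) :
    IsAffinePerm (mapAt i f) := by
  refine .piMap fun k => ?_
  rcases eq_or_ne k i with rfl | hk
  · simpa using hf
  · simpa [hk] using isAffinePerm_id

theorem HasCrossCommutingNonabelianSquare.exists_of_pi
    (h : HasCrossCommutingNonabelianSquare (∀ k, R k)) :
    (∃ k, HasCrossCommutingNonabelianSquare (R k)) ∨
      ∃ i j, i ≠ j ∧ HasNoncommutingAffinePair (R i) ∧ HasNoncommutingAffinePair (R j) := by
  obtain ⟨F₀, F₁, G₀, G₁, hF₀, hF₁, hG₀, hG₁, h₀₀, h₀₁, h₁₀, h₁₁, hF, hG⟩ := h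
  obtain ⟨f₀, hf₀, rfl⟩ := hF₀.exists_eq_piMap
  obtain ⟨f₁, hf₁, rfl⟩ := hF₁.exists_eq_piMap
  obtain ⟨g₀, hg₀, rfl⟩ := hG₀.exists_eq_piMap
  obtain ⟨g₁, hg₁, rfl⟩ := hG₁.exists_eq_piMap
  simp only [mapsCommute_piMap_iff, not_forall] at h₀₀ h₀₁ h₁₀ h₁₁ hF hG
  obtain ⟨i, hi⟩ := hF
  obtain ⟨j, hj⟩ := hG
  rcases eq_or_ne i j with rfl | hij
  · exact .inl ⟨i, f₀ i, f₁ i, g₀ i, g₁ i, hf₀ i, hf₁ i, hg₀ i, hg₁ i,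
      h₀₀ i, h₀₁ i, h₁₀ i, h₁₁ i, hi, hj⟩
  · exact .inr ⟨i, j, hij, ⟨f₀ i, f₁ i, hf₀ i, hf₁ i, hi⟩, ⟨g₀ j, g₁ j, hg₀ j, hg₁ j, hj⟩⟩

theorem HasCrossCommutingNonabelianSquare.pi {k : ι}
    (h : HasCrossCommutingNonabelianSquare (R k)) :
    HasCrossCommutingNonabelianSquare (∀ k, R k) := by
  classical
  obtain ⟨F₀, F₁, G₀, G₁, hF₀, hF₁, hG₀, hG₁, hcomm⟩ := h
  refine ⟨mapAt k F₀, mapAt k F₁, mapAt k G₀, mapAt k G₁,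
    hF₀.mapAt, hF₁.mapAt, hG₀.mapAt, hG₁.mapAt, ?_⟩
  simpa only [mapsCommute_mapAt_iff] using hcomm

theorem hasCrossCommutingNonabelianSquare_pi_of_ne {i j : ι} (hij : i ≠ j)
    (hi : HasNoncommutingAffinePair (R i)) (hj : HasNoncommutingAffinePair (R j)) :
    HasCrossCommutingNonabelianSquare (∀ k, R k) := by
  classical
  obtain ⟨f₀, f₁, hf₀, hf₁, hf⟩ := hi
  obtain ⟨g₀, g₁, hg₀, hg₁, hg⟩ := hj
  have cross := mapsCommute_mapAt_of_ne (α := R) hij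
  exact ⟨mapAt i f₀, mapAt i f₁, mapAt j g₀, mapAt j g₁,
    hf₀.mapAt, hf₁.mapAt, hg₀.mapAt, hg₁.mapAt,
    cross f₀ g₀, cross f₀ g₁, cross f₁ g₀, cross f₁ g₁,
    mapsCommute_mapAt_iff.not.mpr hf, mapsCommute_mapAt_iff.not.mpr hg⟩

theorem hasCrossCommutingNonabelianSquare_pi_iff :
    HasCrossCommutingNonabelianSquare (∀ k, R k) ↔
      (∃ k, HasCrossCommutingNonabelianSquare (R k)) ∨
        ∃ i j, i ≠ j ∧ HasNoncommutingAffinePair (R i) ∧ HasNoncommutingAffinePair (R j) := by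
  refine ⟨fun h => h.exists_of_pi, ?_⟩
  rintro (⟨k, hk⟩ | ⟨i, j, hij, hi, hj⟩)
  · exact hk.pi
  · exact hasCrossCommutingNonabelianSquare_pi_of_ne hij hi hj

end Pi

theorem pir_classification_general {ι : Type*} (R : ι → Type*) [∀ k, CommRing (R k)]
    [∀ k, PreValuationRing (R k)] :
    HasCrossCommutingNonabelianSquare (∀ k, R k) ↔
      ∃ i j : ι, i ≠ j ∧ HasNoncommutingAffinePair (R i) ∧ HasNoncommutingAffinePair (R j) := by
  rw [hasCrossCommutingNonabelianSquare_pi_iff, or_iff_right]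
  rintro ⟨k, hk⟩
  exact not_hasCrossCommutingNonabelianSquare_of_preValuationRing (R k) hk

/-- **Classification over finite commutative principal ideal rings (local factors
version).** Let `R = ∏ k, R k` be a finite product of finite nontrivial commutative
local principal ideal rings. The affine group of `R` contains a cross-commuting
nonabelian square if and only if there are two distinct indices `i ≠ j` whose affine
groups each contain a noncommuting pair. -/
theorem pir_classification {ι : Type*} [Fintype ι] [Nonempty ι] (R : ι → Type*)
    [∀ k, CommRing (R k)] [∀ k, Finite (R k)] [∀ k, Nontrivial (R k)]
    [∀ k, IsLocalRing (R k)] [∀ k, IsPrincipalIdealRing (R k)] :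
    HasCrossCommutingNonabelianSquare (∀ k, R k) ↔
      ∃ i j : ι, i ≠ j ∧ HasNoncommutingAffinePair (R i) ∧ HasNoncommutingAffinePair (R j) := by
  have (k : ι) : PreValuationRing (R k) := preValuationRing_of_isLocalRing_of_isBezout (R k)
  exact pir_classification_general R
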